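/- Let (H, x, Y) be an sl2-triple in a finite-dimensional Lie algebra g over a field k of characteristic zero, and assume x is even, i.e. g_1 = 0. Let 𝔳 be the supremum of the subspaces g_i over all integers i ≥ 2, and let ⁅𝔳, 𝔳⁆ be the k-span of all brackets of pairs of elements of 𝔳. Then the composite k-linear map g_2 → 𝔳 → 𝔳/⁅𝔳, 𝔳⁆ (inclusion followed by the quotient projection) is a linear isomorphism. -/

import Mathlib

/-- The `i`-eigenspace of `ad H` on a Lie algebra `g`:
`g_i = {z ∈ g | ⁅H, z⁆ = (i : k) • z}`. -/
def gwt (k : Type*) [Field k] {g : Type*} [LieRing g] [LieAlgebra k g]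
    (H : g) (i : ℤ) : Submodule k g where
  carrier := {z | ⁅H, z⁆ = (i : k) • z}
  add_mem' := by
    intro a b ha hb
    simp only [Set.mem_setOf_eq] at *
    rw [lie_add, ha, hb, smul_add]
  zero_mem' := by simp
  smul_mem' := by
    intro c a ha
    simp only [Set.mem_setOf_eq] at *
    rw [lie_smul, ha]
    exact smul_comm c ((i : k)) a

/-- The sum `⨆ {i ≥ n} g_i` of the eigenspaces of `ad H` with eigenvalue at least `n`. -/
def vsp (k : Type*) [Field k] {g : Type*} [LieRing g] [LieAlgebra k g]
    (H : g) (n : ℤ) : Submodule k g :=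
  ⨆ i : ℤ, ⨆ _ : n ≤ i, gwt k H i

/-- The commutator subspace `⁅V, V⁆`: the `k`-span of all brackets of pairs of
elements of `V`. -/
def brkt (k : Type*) [Field k] {g : Type*} [LieRing g] [LieAlgebra k g]
    (V : Submodule k g) : Submodule k g :=
  Submodule.span k {w : g | ∃ a ∈ V, ∃ b ∈ V, w = ⁅a, b⁆}

lemma gwt_le_vsp (k : Type*) [Field k] {g : Type*} [LieRing g] [LieAlgebra k g]
    (H : g) {n i : ℤ} (h : n ≤ i) : gwt k H i ≤ vsp k H n :=
  le_iSup_of_le i (le_iSup_of_le h le_rfl)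

/-- The composite map `g_2 → 𝔳 → 𝔳 ⧸ ⁅𝔳, 𝔳⁆`, where `𝔳 = ⨆ {i ≥ 2} g_i`. -/
def inclClassMap (k : Type*) [Field k] {g : Type*} [LieRing g] [LieAlgebra k g]
    (H : g) :
    gwt k H 2 → (vsp k H 2 ⧸ (brkt k (vsp k H 2)).comap (vsp k H 2).subtype) :=
  fun a => Submodule.Quotient.mk
    (Submodule.inclusion (gwt_le_vsp k H (le_refl (2 : ℤ))) a)

/-
In a representation of `sl₂` with `e` locally nilpotent, `e` maps the eigenspace of weight `μ - 2`
onto that of weight `μ` unless `-μ` is a natural number. Hence `g_i = ⁅x, g_{i-2}⁆` for `i ≥ 1`.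
Since `x ∈ g_2`, this puts `g_i` in `⁅𝔳, 𝔳⁆` as soon as `i ≥ 4`, and it gives `g_3 = ⁅x, g_1⁆ = 0`
when `x` is even; so `g_2` and `⁅𝔳, 𝔳⁆` span `𝔳`. They meet trivially, because `⁅𝔳, 𝔳⁆` lives in
weights at least `4`.
-/

section LieModule

open LieModule

variable {R L M : Type*} [CommRing R] [LieRing L] [LieAlgebra R L] [AddCommGroup M] [Module R M]
  [LieRingModule L M] [LieModule R L M] {h e f : L} {α μ : R} {m : M}

lemma lie_mem_eigenspace_toEnd (he : ⁅h, e⁆ = α • e)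
    (hm : m ∈ (toEnd R L M h).eigenspace μ) :
    ⁅e, m⁆ ∈ (toEnd R L M h).eigenspace (μ + α) := by
  rw [Module.End.mem_eigenspace_iff, toEnd_apply_apply] at hm ⊢
  rw [leibniz_lie, he, hm, smul_lie, lie_smul, ← add_smul, add_comm]

lemma toEnd_pow_mem_eigenspace_toEnd (he : ⁅h, e⁆ = α • e)
    (hm : m ∈ (toEnd R L M h).eigenspace μ) (n : ℕ) :
    (toEnd R L M e ^ n) m ∈ (toEnd R L M h).eigenspace (μ + n * α) := by
  induction n with
  | zero => simpa using hm
  | succ n ih =>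
    rw [pow_succ', Module.End.mul_apply, toEnd_apply_apply, Nat.cast_succ, add_one_mul,
      ← add_assoc]
    exact lie_mem_eigenspace_toEnd he ih

lemma toEnd_pow_succ_lie (he : ⁅h, e⁆ = (2 : R) • e) (hef : ⁅e, f⁆ = h)
    (hm : m ∈ (toEnd R L M h).eigenspace μ) (n : ℕ) :
    (toEnd R L M e ^ (n + 1)) ⁅f, m⁆ =
      ⁅f, (toEnd R L M e ^ (n + 1)) m⁆ + ((n + 1) * (μ + n)) • (toEnd R L M e ^ n) m := by
  have e_lie_f (v : M) : ⁅e, ⁅f, v⁆⁆ = ⁅f, ⁅e, v⁆⁆ + ⁅h, v⁆ := by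
    rw [leibniz_lie, hef, add_comm]
  have lie_h (j : ℕ) : ⁅h, (toEnd R L M e ^ j) m⁆ = (μ + j * 2) • (toEnd R L M e ^ j) m :=
    Module.End.mem_eigenspace_iff.1 (toEnd_pow_mem_eigenspace_toEnd he hm j)
  have pow_succ_apply (j : ℕ) (v : M) :
      (toEnd R L M e ^ (j + 1)) v = ⁅e, (toEnd R L M e ^ j) v⁆ := by
    rw [pow_succ', Module.End.mul_apply, toEnd_apply_apply]
  induction n with
  | zero => simpa [e_lie_f] using lie_h 0
  | succ n ih =>
    rw [pow_succ_apply, ih, lie_add, e_lie_f, lie_h, lie_smul, ← pow_succ_apply, ← pow_succ_apply,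
      add_assoc, ← add_smul]
    congr 2
    push_cast
    ring

end LieModule

section CharZero

open LieModule

variable {K L M : Type*} [Field K] [CharZero K] [LieRing L] [LieAlgebra K L] [AddCommGroup M]
  [Module K M] [LieRingModule L M] [LieModule K L M] {h e f : L} {α μ : K} {m : M}

lemma exists_toEnd_pow_apply_eq_zero [FiniteDimensional K M] (hα : α ≠ 0) (he : ⁅h, e⁆ = α • e)
    (hm : m ∈ (toEnd K L M h).eigenspace μ) : ∃ n : ℕ, (toEnd K L M e ^ n) m = 0 := by
  by_contra! hne
  have weight_injective : Function.Injective fun n : ℕ ↦ μ + n * α := fun a b hab ↦ by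
    simpa [hα] using hab
  exact Set.infinite_of_injective_forall_mem weight_injective
    (fun n ↦ Module.End.hasEigenvalue_of_hasEigenvector
      ⟨toEnd_pow_mem_eigenspace_toEnd he hm n, hne n⟩)
    (toEnd K L M h).finite_hasEigenvalue

lemma mem_map_toEnd_eigenspace_of_toEnd_pow_apply_eq_zero (he : ⁅h, e⁆ = (2 : K) • e)
    (hf : ⁅h, f⁆ = (-2 : K) • f) (hef : ⁅e, f⁆ = h) (hμ : ∀ n : ℕ, μ + n ≠ 0) {n : ℕ}
    (hm : m ∈ (toEnd K L M h).eigenspace μ) (hn : (toEnd K L M e ^ n) m = 0) :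
    m ∈ ((toEnd K L M h).eigenspace (μ - 2)).map (toEnd K L M e) := by
  induction n generalizing m with
  | zero =>
    obtain rfl : m = 0 := by simpa using hn
    exact zero_mem _
  | succ n ih =>
    set c : K := (n + 1) * (μ + n)
    have hc : c ≠ 0 := mul_ne_zero n.cast_add_one_ne_zero (hμ n)
    have hfm : ⁅f, m⁆ ∈ (toEnd K L M h).eigenspace (μ - 2) := by
      simpa only [← sub_eq_add_neg] using lie_mem_eigenspace_toEnd hf hm
    have hefm : ⁅e, ⁅f, m⁆⁆ ∈ (toEnd K L M h).eigenspace μ := by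
      simpa only [sub_add_cancel] using lie_mem_eigenspace_toEnd he hfm
    -- `e f` acts as the nonzero scalar `c` on `ker e ^ (n + 1)` modulo `ker e ^ n`.
    have pow_apply_sub : (toEnd K L M e ^ n) (⁅e, ⁅f, m⁆⁆ - c • m) = 0 := by
      have key := toEnd_pow_succ_lie he hef hm n
      rw [hn, lie_zero, zero_add, pow_succ, Module.End.mul_apply, toEnd_apply_apply] at key
      rw [map_sub, map_smul, key, sub_self]
    have hcm : c • m ∈ ((toEnd K L M h).eigenspace (μ - 2)).map (toEnd K L M e) := by
      rw [← sub_sub_cancel ⁅e, ⁅f, m⁆⁆ (c • m)]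
      exact sub_mem (Submodule.mem_map_of_mem hfm)
        (ih (sub_mem hefm (Submodule.smul_mem _ c hm)) pow_apply_sub)
    exact (Submodule.smul_mem_iff _ hc).1 hcm

end CharZero

section Grading

open LieModule

variable {k : Type*} [Field k] {g : Type*} [LieRing g] [LieAlgebra k g] {H : g}

lemma mem_gwt {i : ℤ} {z : g} : z ∈ gwt k H i ↔ ⁅H, z⁆ = (i : k) • z :=
  Iff.rfl

lemma gwt_eq_eigenspace (i : ℤ) : gwt k H i = (toEnd k g g H).eigenspace (i : k) := by
  ext z
  rw [mem_gwt, Module.End.mem_eigenspace_iff, toEnd_apply_apply]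

lemma lie_mem_gwt {i j : ℤ} {a b : g} (ha : a ∈ gwt k H i) (hb : b ∈ gwt k H j) :
    ⁅a, b⁆ ∈ gwt k H (i + j) := by
  rw [gwt_eq_eigenspace] at hb
  rw [gwt_eq_eigenspace, add_comm, Int.cast_add]
  exact lie_mem_eigenspace_toEnd (mem_gwt.1 ha) hb

lemma iSupIndep_gwt [CharZero k] : iSupIndep (gwt k H) := by
  rw [funext (gwt_eq_eigenspace (k := k) (H := H))]
  exact (toEnd k g g H).eigenspaces_iSupIndep.comp Int.cast_injective

lemma disjoint_gwt_vsp [CharZero k] {i n : ℤ} (hin : i < n) :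
    Disjoint (gwt k H i) (vsp k H n) :=
  iSupIndep_gwt.disjoint_biSup (y := {j | n ≤ j}) hin.not_ge

lemma lie_mem_vsp {p q : ℤ} {a b : g} (ha : a ∈ vsp k H p) (hb : b ∈ vsp k H q) :
    ⁅a, b⁆ ∈ vsp k H (p + q) := by
  suffices Submodule.map₂ (toEnd k g g : g →ₗ[k] g →ₗ[k] g) (vsp k H p) (vsp k H q) ≤
      vsp k H (p + q) from Submodule.map₂_le.1 this a ha b hb
  simp only [vsp, Submodule.map₂_iSup_left, Submodule.map₂_iSup_right,
    iSup_le_iff, Submodule.map₂_le]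
  exact fun j hj i hi a ha b hb ↦ gwt_le_vsp k H (by lia) (lie_mem_gwt ha hb)

lemma lie_mem_brkt {V : Submodule k g} {a b : g} (ha : a ∈ V) (hb : b ∈ V) :
    ⁅a, b⁆ ∈ brkt k V :=
  Submodule.subset_span ⟨a, ha, b, hb, rfl⟩

lemma brkt_vsp_le_vsp (n : ℤ) : brkt k (vsp k H n) ≤ vsp k H (n + n) := by
  refine Submodule.span_le.2 ?_
  rintro _ ⟨a, ha, b, hb, rfl⟩
  exact lie_mem_vsp ha hb

lemma isLinearMap_inclClassMap : IsLinearMap k (inclClassMap k H) :=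
  ⟨fun _ _ ↦ rfl, fun _ _ ↦ rfl⟩

lemma inclClassMap_injective (hdisj : Disjoint (gwt k H 2) (brkt k (vsp k H 2))) :
    Function.Injective (inclClassMap k H) := by
  intro a b hab
  have hmem := (Submodule.Quotient.eq ((brkt k (vsp k H 2)).comap (vsp k H 2).subtype)).1 hab
  exact Subtype.ext (sub_eq_zero.1 (Submodule.disjoint_def.1 hdisj _ (sub_mem a.2 b.2) hmem))

lemma inclClassMap_surjective (hle : vsp k H 2 ≤ gwt k H 2 ⊔ brkt k (vsp k H 2)) :
    Function.Surjective (inclClassMap k H) := by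
  intro q
  obtain ⟨v, rfl⟩ := Submodule.Quotient.mk_surjective _ q
  obtain ⟨a, ha, b, hb, hab⟩ := Submodule.mem_sup.1 (hle v.2)
  refine ⟨⟨a, ha⟩, (Submodule.Quotient.eq _).2 ?_⟩
  change a - (v : g) ∈ brkt k (vsp k H 2)
  rw [← hab, sub_add_cancel_left]
  exact neg_mem hb

end Grading

section Sl2Triple

variable {k : Type*} [Field k] [CharZero k] {g : Type*} [LieRing g] [LieAlgebra k g] {H x Y : g}

lemma exists_ad_pow_apply_eq_zero_of_mem_gwt [FiniteDimensional k g]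
    (hHx : ⁅H, x⁆ = (2 : k) • x) {i : ℤ} {z : g} (hz : z ∈ gwt k H i) :
    ∃ n : ℕ, (LieAlgebra.ad k g x ^ n) z = 0 := by
  rw [gwt_eq_eigenspace] at hz
  exact exists_toEnd_pow_apply_eq_zero two_ne_zero hHx hz

lemma gwt_le_map_ad (hHx : ⁅H, x⁆ = (2 : k) • x) (hHY : ⁅H, Y⁆ = (-2 : k) • Y)
    (hxY : ⁅x, Y⁆ = H) {i : ℤ} (hi : 1 ≤ i)
    (hnil : ∀ z ∈ gwt k H i, ∃ n : ℕ, (LieAlgebra.ad k g x ^ n) z = 0) :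
    gwt k H i ≤ (gwt k H (i - 2)).map (LieAlgebra.ad k g x : g →ₗ[k] g) := by
  intro z hz
  obtain ⟨n, hn⟩ := hnil z hz
  have weight_ne (j : ℕ) : (i : k) + j ≠ 0 := by
    exact_mod_cast (by lia : i + j ≠ 0)
  rw [gwt_eq_eigenspace] at hz ⊢
  push_cast
  exact mem_map_toEnd_eigenspace_of_toEnd_pow_apply_eq_zero hHx hHY hxY weight_ne hz hn

lemma gwt_three_eq_bot_of_gwt_one_eq_bot [FiniteDimensional k g] (hHx : ⁅H, x⁆ = (2 : k) • x)
    (hHY : ⁅H, Y⁆ = (-2 : k) • Y) (hxY : ⁅x, Y⁆ = H) (hone : gwt k H 1 = ⊥) :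
    gwt k H 3 = ⊥ := by
  have hle : gwt k H 3 ≤ (gwt k H 1).map (LieAlgebra.ad k g x : g →ₗ[k] g) :=
    gwt_le_map_ad hHx hHY hxY (by lia) fun _ ↦ exists_ad_pow_apply_eq_zero_of_mem_gwt hHx
  rwa [hone, Submodule.map_bot, le_bot_iff] at hle

lemma vsp_two_le_gwt_two_sup_brkt (hHx : ⁅H, x⁆ = (2 : k) • x) (hHY : ⁅H, Y⁆ = (-2 : k) • Y)
    (hxY : ⁅x, Y⁆ = H) (hthree : gwt k H 3 = ⊥)
    (hnil : ∀ i, 4 ≤ i → ∀ z ∈ gwt k H i, ∃ n : ℕ, (LieAlgebra.ad k g x ^ n) z = 0) :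
    vsp k H 2 ≤ gwt k H 2 ⊔ brkt k (vsp k H 2) := by
  refine iSup₂_le fun i hi ↦ ?_
  obtain rfl | rfl | hi : i = 2 ∨ i = 3 ∨ 4 ≤ i := by lia
  · exact le_sup_left
  · exact hthree ▸ bot_le
  · refine le_sup_of_le_right
      ((gwt_le_map_ad hHx hHY hxY (by lia) (hnil i hi)).trans (Submodule.map_le_iff_le_comap.2 ?_))
    have hx : x ∈ gwt k H 2 := mem_gwt.2 (by exact_mod_cast hHx)
    exact fun u hu ↦ lie_mem_brkt (gwt_le_vsp k H le_rfl hx) (gwt_le_vsp k H (by lia) hu)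

end Sl2Triple

theorem stmt9_general {k : Type*} [Field k] [CharZero k]
    {g : Type*} [LieRing g] [LieAlgebra k g]
    (H x Y : g) (hHx : ⁅H, x⁆ = (2 : k) • x) (hHY : ⁅H, Y⁆ = (-2 : k) • Y)
    (hxY : ⁅x, Y⁆ = H) (hthree : gwt k H 3 = ⊥)
    (hnil : ∀ i, 4 ≤ i → ∀ z ∈ gwt k H i, ∃ n : ℕ, (LieAlgebra.ad k g x ^ n) z = 0) :
    IsLinearMap k (inclClassMap k H) ∧ Function.Bijective (inclClassMap k H) :=
  ⟨isLinearMap_inclClassMap,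
    inclClassMap_injective ((disjoint_gwt_vsp (by lia)).mono_right (brkt_vsp_le_vsp 2)),
    inclClassMap_surjective (vsp_two_le_gwt_two_sup_brkt hHx hHY hxY hthree hnil)⟩

/-- If `x` is even (`g_1 = 0`), then the composite `k`-linear map
`g_2 → 𝔳 → 𝔳 ⧸ ⁅𝔳, 𝔳⁆` is a linear isomorphism. -/
theorem stmt9 {k : Type*} [Field k] [CharZero k]
    {g : Type*} [LieRing g] [LieAlgebra k g] [FiniteDimensional k g]
    (H x Y : g) (hHx : ⁅H, x⁆ = (2 : k) • x) (hHY : ⁅H, Y⁆ = (-2 : k) • Y)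
    (hxY : ⁅x, Y⁆ = H) (heven : gwt k H 1 = ⊥) :
    IsLinearMap k (inclClassMap k H) ∧ Function.Bijective (inclClassMap k H) :=
  stmt9_general H x Y hHx hHY hxY (gwt_three_eq_bot_of_gwt_one_eq_bot hHx hHY hxY heven)
    fun _ _ _ ↦ exists_ad_pow_apply_eq_zero_of_mem_gwt hHx
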